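/- Under Assumption 1 on the value distribution and non-degenerate beliefs, suppose β : [v̲, v̄] → ℝ is continuously differentiable, strictly increasing with β'(v) > 0 on (v̲, v̄], and satisfies the first-order condition β'(v) = (v − β(v))·g(v)/A(G(v)) for all v ∈ (v̲, v̄]. Let Q(u) = β(G⁻¹(u)) be the bid quantile function and q(u) = Q'(u) the bid quantile density. Then for every u ∈ (0,1], the value quantile function satisfies G⁻¹(u) = Q(u) + A(u)·q(u). (Identification equation (iden2) in quantile form.) -/

import Mathlib

open MeasureTheory Set Filter

noncomputable section

/-- `A₁(u) = ∑_{m=1}^M p_m u^(m-1)`. -/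
def A1 (M : ℕ) (p : ℕ → ℝ) (u : ℝ) : ℝ := ∑ m ∈ Finset.Icc 1 M, p m * u ^ (m - 1)

/-- `A₂(u) = u A₁(u)`. -/
def A2 (M : ℕ) (p : ℕ → ℝ) (u : ℝ) : ℝ := u * A1 M p u

/-- `A₃(u) = (1-u) A₁(u)`. -/
def A3 (M : ℕ) (p : ℕ → ℝ) (u : ℝ) : ℝ := (1 - u) * A1 M p u

/-- `A(u) = A₁(u)/A₁'(u)`. -/
def Afun (M : ℕ) (p : ℕ → ℝ) (u : ℝ) : ℝ := A1 M p u / deriv (A1 M p) u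

/-- Assumption 1: the value distribution `G` is a CDF supported on `[v̲, v̄]` with
`0 ≤ v̲ < v̄ < ∞`, twice continuously differentiable there, with density `g = G' > 0`. -/
structure Assumption1 (G g : ℝ → ℝ) (vlo vhi : ℝ) : Prop where
  lo_nonneg : 0 ≤ vlo
  lo_lt_hi : vlo < vhi
  mono : Monotone G
  eq_zero : ∀ x ≤ vlo, G x = 0
  eq_one : ∀ x, vhi ≤ x → G x = 1
  smooth : ContDiffOn ℝ 2 G (Set.Icc vlo vhi)
  hasDeriv : ∀ x ∈ Set.Icc vlo vhi, HasDerivWithinAt G (g x) (Set.Icc vlo vhi) x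
  density_pos : ∀ x ∈ Set.Icc vlo vhi, 0 < g x

/-- Non-degenerate symmetric beliefs `p₁, …, p_M` about the number of active bidders. -/
structure Beliefs (M : ℕ) (p : ℕ → ℝ) : Prop where
  nonneg : ∀ m, 0 ≤ p m
  sum_one : ∑ m ∈ Finset.Icc 1 M, p m = 1
  nondegen : 0 < ∑ m ∈ Finset.Icc 2 M, p m

/-!
Since `G` is a continuous injection of a compact interval, its inverse is continuous, hence
differentiable wherever `g ≠ 0`, with derivative `1 / g`. The chain rule then gives the bid quantile
density `q(u) = β'(v) / g(v)` at `v = G⁻¹(u)`, and the first-order condition reads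
`A(u) q(u) = v - β(v)`. Nondegenerate beliefs make `A` positive on `(0, ∞)`, so this division by
`A(u)` is a genuine one.
-/

open scoped Topology

theorem continuousOn_of_invOn_of_isCompact {X Y : Type*} [TopologicalSpace X] [TopologicalSpace Y]
    [T2Space Y] {f : X → Y} {finv : Y → X} {s : Set X} {t : Set Y} (hs : IsCompact s)
    (hf : ContinuousOn f s) (hinv : InvOn finv f s t) (hmaps : MapsTo finv t s) :
    ContinuousOn finv t := by
  refine continuousOn_iff_isClosed.mpr fun C hC ↦ ⟨f '' (s ∩ C), ?_, ?_⟩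
  · exact ((hs.inter_right hC).image_of_continuousOn (hf.mono inter_subset_left)).isClosed
  · ext y
    refine and_congr_left fun hy ↦ ⟨fun hyC ↦ ⟨finv y, ⟨hmaps hy, hyC⟩, hinv.2 hy⟩, ?_⟩
    rintro ⟨x, ⟨hx, hxC⟩, rfl⟩
    rwa [mem_preimage, hinv.1 hx]

theorem hasDerivWithinAt_of_local_left_inverse {𝕜 : Type*} [NontriviallyNormedField 𝕜]
    {f g : 𝕜 → 𝕜} {f' a : 𝕜} {s t : Set 𝕜} (hg : Tendsto g (𝓝[s] a) (𝓝[t] (g a)))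
    (hf : HasDerivWithinAt f f' t (g a)) (hf' : f' ≠ 0) (ha : a ∈ s)
    (hfg : ∀ᶠ x in 𝓝[s] a, f (g x) = x) : HasDerivWithinAt g f'⁻¹ s a := by
  have hfderiv : HasFDerivWithinAt f
      (ContinuousLinearEquiv.unitsEquivAut 𝕜 (Units.mk0 f' hf') : 𝕜 →L[𝕜] 𝕜) t (g a) := hf
  exact HasFDerivWithinAt.of_local_left_inverse hg hfderiv ha hfg

section Beliefs

variable {M : ℕ} {p : ℕ → ℝ} {u : ℝ}

theorem Beliefs.exists_pos (hp : Beliefs M p) : ∃ m ∈ Finset.Icc 2 M, 0 < p m :=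
  Finset.exists_lt_of_sum_lt (by simpa using hp.nondegen)

theorem Beliefs.A1_pos (hp : Beliefs M p) (hu : 0 < u) : 0 < A1 M p u := by
  obtain ⟨m, hm, hpm⟩ := hp.exists_pos
  refine Finset.sum_pos' (fun k _ ↦ mul_nonneg (hp.nonneg k) (by positivity)) ⟨m, ?_, by positivity⟩
  exact Finset.Icc_subset_Icc_left one_le_two hm

theorem hasDerivAt_A1 (M : ℕ) (p : ℕ → ℝ) (u : ℝ) :
    HasDerivAt (A1 M p)
      (∑ m ∈ Finset.Icc 1 M, p m * (((m - 1 : ℕ) : ℝ) * u ^ (m - 1 - 1))) u :=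
  HasDerivAt.fun_sum fun m _ ↦ (hasDerivAt_pow (m - 1) u).const_mul (p m)

theorem Beliefs.deriv_A1_pos (hp : Beliefs M p) (hu : 0 < u) : 0 < deriv (A1 M p) u := by
  obtain ⟨m, hm, hpm⟩ := hp.exists_pos
  rw [(hasDerivAt_A1 M p u).deriv]
  refine Finset.sum_pos' (fun k _ ↦ mul_nonneg (hp.nonneg k) (by positivity)) ⟨m, ?_, ?_⟩
  · exact Finset.Icc_subset_Icc_left one_le_two hm
  · have : 0 < m - 1 := Nat.sub_pos_of_lt (Finset.mem_Icc.mp hm).1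
    positivity

theorem Beliefs.Afun_pos (hp : Beliefs M p) (hu : 0 < u) : 0 < Afun M p u :=
  div_pos (hp.A1_pos hu) (hp.deriv_A1_pos hu)

end Beliefs

theorem quantile_identification_general {A G g β βd Ginv : ℝ → ℝ} {vlo vhi : ℝ}
    (hGderiv : ∀ x ∈ Icc vlo vhi, HasDerivWithinAt G (g x) (Icc vlo vhi) x)
    (hGlo : G vlo = 0) (hg : ∀ x ∈ Ioc vlo vhi, g x ≠ 0)
    (hβderiv : ∀ x ∈ Ioc vlo vhi, HasDerivWithinAt β (βd x) (Icc vlo vhi) x)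
    (hA : ∀ u ∈ Ioc (0 : ℝ) 1, A u ≠ 0)
    (hfoc : ∀ x ∈ Ioc vlo vhi, βd x = (x - β x) * g x / A (G x))
    (hinv : InvOn Ginv G (Icc vlo vhi) (Icc 0 1))
    (hmaps : MapsTo Ginv (Icc 0 1) (Icc vlo vhi)) :
    ∀ u ∈ Ioc (0 : ℝ) 1,
      Ginv u = β (Ginv u) + A u * derivWithin (β ∘ Ginv) (Icc 0 1) u := by
  intro u hu
  have huIcc : u ∈ Icc (0 : ℝ) 1 := Ioc_subset_Icc_self hu
  have hGu : G (Ginv u) = u := hinv.2 huIcc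
  have hv : Ginv u ∈ Icc vlo vhi := hmaps huIcc
  have hne : vlo ≠ Ginv u := fun h ↦ hu.1.ne (by rw [← hGlo, h, hGu])
  have hvIoc : Ginv u ∈ Ioc vlo vhi := ⟨hv.1.lt_of_ne hne, hv.2⟩
  have hGcont : ContinuousOn G (Icc vlo vhi) := fun x hx ↦ (hGderiv x hx).continuousWithinAt
  have hGinvcont : ContinuousOn Ginv (Icc 0 1) :=
    continuousOn_of_invOn_of_isCompact isCompact_Icc hGcont hinv hmaps
  have hGinvderiv : HasDerivWithinAt Ginv (g (Ginv u))⁻¹ (Icc 0 1) u :=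
    hasDerivWithinAt_of_local_left_inverse ((hGinvcont u huIcc).tendsto_nhdsWithin hmaps)
      (hGderiv _ hv) (hg _ hvIoc) huIcc (eventually_mem_nhdsWithin.mono hinv.2)
  have hq : HasDerivWithinAt (β ∘ Ginv) (βd (Ginv u) * (g (Ginv u))⁻¹) (Icc 0 1) u :=
    (hβderiv _ hvIoc).comp u hGinvderiv hmaps
  have hmarkdown : A u * (βd (Ginv u) * (g (Ginv u))⁻¹) = Ginv u - β (Ginv u) := by
    have hAu : A u ≠ 0 := hA u hu
    have hgv : g (Ginv u) ≠ 0 := hg _ hvIoc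
    rw [hfoc _ hvIoc, hGu]
    field_simp
  rw [hq.derivWithin (uniqueDiffOn_Icc zero_lt_one u huIcc), hmarkdown, add_sub_cancel]

/-- Identification equation (iden2) in quantile form: with bid quantile function
`Q(u) = β(G⁻¹(u))` and bid quantile density `q = Q'`, the value quantile function
satisfies `G⁻¹(u) = Q(u) + A(u) q(u)` for every `u ∈ (0,1]`. -/
theorem quantile_identification
    (M : ℕ) (p : ℕ → ℝ) (hM : 2 ≤ M) (hbel : Beliefs M p)
    (G g : ℝ → ℝ) (vlo vhi : ℝ) (hG : Assumption1 G g vlo vhi)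
    (β βd : ℝ → ℝ)
    (hβderiv : ∀ x ∈ Set.Icc vlo vhi, HasDerivWithinAt β (βd x) (Set.Icc vlo vhi) x)
    (hβd_cont : ContinuousOn βd (Set.Icc vlo vhi))
    (hβmono : StrictMonoOn β (Set.Icc vlo vhi))
    (hβd_pos : ∀ x ∈ Set.Ioc vlo vhi, 0 < βd x)
    (hfoc : ∀ x ∈ Set.Ioc vlo vhi, βd x = (x - β x) * g x / Afun M p (G x))
    (Ginv : ℝ → ℝ)
    (hGinv_mem : ∀ u ∈ Set.Icc (0 : ℝ) 1, Ginv u ∈ Set.Icc vlo vhi)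
    (hGinv_right : ∀ u ∈ Set.Icc (0 : ℝ) 1, G (Ginv u) = u)
    (hGinv_left : ∀ x ∈ Set.Icc vlo vhi, Ginv (G x) = x)
    (Q : ℝ → ℝ) (hQ : ∀ u, Q u = β (Ginv u)) :
    ∀ u ∈ Set.Ioc (0 : ℝ) 1,
      Ginv u = Q u + Afun M p u * derivWithin Q (Set.Icc 0 1) u := by
  obtain rfl : Q = β ∘ Ginv := funext hQ
  exact quantile_identification_general hG.hasDeriv (hG.eq_zero vlo le_rfl)
    (fun x hx ↦ (hG.density_pos x (Ioc_subset_Icc_self hx)).ne')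
    (fun x hx ↦ hβderiv x (Ioc_subset_Icc_self hx)) (fun u hu ↦ (hbel.Afun_pos hu.1).ne') hfoc
    ⟨hGinv_left, hGinv_right⟩ hGinv_mem
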